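/- arXiv:2202.09402 — 2 statements merged into one kernel-verified Lean document; each statement's English description precedes it below -/
import Mathlib

section
/- Maximality of the sublevel safe set: fix u₀ ≥ 0 and suppose A ⊆ Fin N satisfies the classical safe-set property: for every i ∈ A and every s ∈ Fin M there exists j ∈ A with ‖f (q i) + ξ s − q j‖ ≤ u₀. Then every i ∈ A satisfies U_k(i) ≤ u₀ for all k ∈ ℕ. -/
/-- The safety operator of the partial control method:
`(T U) i = max_{s} min_{j} max (‖f (q i) + ξ s - q j‖) (U j)`. -/
noncomputable def safetyOp {X : Type*} [NormedAddCommGroup X] {N M : ℕ}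
    [NeZero N] [NeZero M] (q : Fin N → X) (f : X → X) (ξ : Fin M → X)
    (U : Fin N → ℝ) : Fin N → ℝ :=
  fun i => Finset.univ.sup' Finset.univ_nonempty fun s : Fin M =>
    Finset.univ.inf' Finset.univ_nonempty fun j : Fin N =>
      max ‖f (q i) + ξ s - q j‖ (U j)

/-- The safety-function iterates: `U₀ = 0` and `U_{k+1} = T U_k`. -/
noncomputable def safetyIter {X : Type*} [NormedAddCommGroup X] {N M : ℕ}
    [NeZero N] [NeZero M] (q : Fin N → X) (f : X → X) (ξ : Fin M → X) :
    ℕ → Fin N → ℝ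
  | 0 => 0
  | k + 1 => safetyOp q f ξ (safetyIter q f ξ k)

/-- The classical safe-set property of partial control at level `u₀`: from every grid point indexed
by `A`, under every disturbance, a control of norm at most `u₀` steers back to a grid point indexed
by `A`. The set is encoded by the indices of its grid points. -/
def IsSafeSet {X : Type*} [NormedAddCommGroup X] {N M : ℕ} (q : Fin N → X) (f : X → X)
    (ξ : Fin M → X) (u₀ : ℝ) (A : Set (Fin N)) : Prop :=
  ∀ i ∈ A, ∀ s : Fin M, ∃ j ∈ A, ‖f (q i) + ξ s - q j‖ ≤ u₀

section SafetyOp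

variable {X : Type*} [NormedAddCommGroup X] {N M : ℕ} [NeZero N] [NeZero M]
  {q : Fin N → X} {f : X → X} {ξ : Fin M → X} {U : Fin N → ℝ} {c : ℝ}

theorem safetyOp_le_iff {i : Fin N} :
    safetyOp q f ξ U i ≤ c ↔ ∀ s : Fin M, ∃ j : Fin N, ‖f (q i) + ξ s - q j‖ ≤ c ∧ U j ≤ c := by
  simp only [safetyOp, Finset.sup'_le_iff, Finset.inf'_le_iff, Finset.mem_univ, true_and,
    forall_const, max_le_iff]

theorem IsSafeSet.safetyOp_le {A : Set (Fin N)} (hA : IsSafeSet q f ξ c A)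
    (hU : ∀ i ∈ A, U i ≤ c) : ∀ i ∈ A, safetyOp q f ξ U i ≤ c := by
  intro i hi
  refine safetyOp_le_iff.2 fun s => ?_
  obtain ⟨j, hj, hcontrol⟩ := hA i hi s
  exact ⟨j, hcontrol, hU j hj⟩

end SafetyOp

/-- Maximality of the sublevel safe set: any set with the classical safe-set property is
contained in every sublevel set `{U_k ≤ u₀}` of the safety-function iterates. -/
theorem safe_set_subset_sublevel {X : Type*} [NormedAddCommGroup X]
    {N M : ℕ} [NeZero N] [NeZero M] (q : Fin N → X) (f : X → X) (ξ : Fin M → X)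
    (u₀ : ℝ) (hu₀ : 0 ≤ u₀) (A : Set (Fin N))
    (hA : ∀ i ∈ A, ∀ s : Fin M, ∃ j ∈ A, ‖f (q i) + ξ s - q j‖ ≤ u₀) :
    ∀ i ∈ A, ∀ k : ℕ, safetyIter q f ξ k i ≤ u₀ := by
  have hsafe : IsSafeSet q f ξ u₀ A := hA
  intro i hi k
  induction k generalizing i with
  | zero => exact hu₀
  | succ k ih => exact hsafe.safetyOp_le ih i hi
end

section
/- Uniform bound for the safety function: set C := max_{i ∈ Fin N, s ∈ Fin M} min_{j ∈ Fin N} ‖f (q i) + ξ s − q j‖. Then every safety-function iterate satisfies U_k(i) ≤ C for all k ∈ ℕ and all i ∈ Fin N. -/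
/-!
The constant function `C` is a fixed point of the monotone operator `T`: `max` with a constant
distributes over the inner minimum, so `min_j max (d j) C = max (min_j d j) C = C`, where
`d j = ‖f (q i) + ξ s - q j‖`. Since `U₀ = 0 ≤ C`, applying `T` keeps every iterate below `C`.
-/

section

variable {X : Type*} [NormedAddCommGroup X] {N M : ℕ} [NeZero N] [NeZero M]

theorem safetyOp_mono (q : Fin N → X) (f : X → X) (ξ : Fin M → X) :
    Monotone (safetyOp q f ξ) := fun _ _ hUV _ =>
  Finset.sup'_mono_fun fun _ _ => Finset.inf'_mono_fun fun j _ => max_le_max_left _ (hUV j)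

/-- The constant `C` of the uniform bound: the largest distance from a disturbed image
`f (q i) + ξ s` to its nearest grid point. -/
noncomputable def worstCaseGap (q : Fin N → X) (f : X → X) (ξ : Fin M → X) : ℝ :=
  Finset.univ.sup' Finset.univ_nonempty fun p : Fin N × Fin M =>
    Finset.univ.inf' Finset.univ_nonempty fun j : Fin N => ‖f (q p.1) + ξ p.2 - q j‖

theorem inf'_norm_le_worstCaseGap (q : Fin N → X) (f : X → X) (ξ : Fin M → X)
    (i : Fin N) (s : Fin M) :
    (Finset.univ.inf' Finset.univ_nonempty fun j : Fin N => ‖f (q i) + ξ s - q j‖) ≤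
      worstCaseGap q f ξ :=
  Finset.le_sup' (fun p : Fin N × Fin M =>
    Finset.univ.inf' Finset.univ_nonempty fun j : Fin N => ‖f (q p.1) + ξ p.2 - q j‖)
    (Finset.mem_univ (i, s))

theorem worstCaseGap_nonneg (q : Fin N → X) (f : X → X) (ξ : Fin M → X) :
    0 ≤ worstCaseGap q f ξ :=
  (Finset.le_inf' _ _ fun _ _ => norm_nonneg _).trans (inf'_norm_le_worstCaseGap q f ξ 0 0)

theorem isFixedPt_safetyOp_const {q : Fin N → X} {f : X → X} {ξ : Fin M → X} {c : ℝ}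
    (hc : worstCaseGap q f ξ ≤ c) :
    Function.IsFixedPt (safetyOp q f ξ) (Function.const (Fin N) c) := by
  funext i
  have inner_min_eq (s : Fin M) :
      (Finset.univ.inf' Finset.univ_nonempty fun j : Fin N =>
        max ‖f (q i) + ξ s - q j‖ c) = c := by
    rw [← Finset.inf'_sup_distrib_right]
    exact max_eq_right ((inf'_norm_le_worstCaseGap q f ξ i s).trans hc)
  simp only [safetyOp, Function.const_apply, inner_min_eq, Finset.sup'_const]

end

/-- Uniform bound for the safety function:
`U_k(i) ≤ C := max_{i,s} min_{j} ‖f (q i) + ξ s − q j‖` for all `k` and `i`. -/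
theorem safetyIter_le_uniform_bound {X : Type*} [NormedAddCommGroup X]
    {N M : ℕ} [NeZero N] [NeZero M] (q : Fin N → X) (f : X → X) (ξ : Fin M → X) :
    ∀ (k : ℕ) (i : Fin N),
      safetyIter q f ξ k i ≤
        Finset.univ.sup' Finset.univ_nonempty fun p : Fin N × Fin M =>
          Finset.univ.inf' Finset.univ_nonempty fun j : Fin N =>
            ‖f (q p.1) + ξ p.2 - q j‖ := by
  intro k
  change safetyIter q f ξ k ≤ Function.const (Fin N) (worstCaseGap q f ξ)
  induction k with
  | zero => exact fun _ => worstCaseGap_nonneg q f ξ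
  | succ k ih =>
    calc safetyIter q f ξ (k + 1)
        = safetyOp q f ξ (safetyIter q f ξ k) := rfl
      _ ≤ safetyOp q f ξ (Function.const (Fin N) (worstCaseGap q f ξ)) := safetyOp_mono q f ξ ih
      _ = Function.const (Fin N) (worstCaseGap q f ξ) := isFixedPt_safetyOp_const le_rfl
end
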